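/- arXiv:1710.01985 — 3 statements merged into one kernel-verified Lean document; each statement's English description precedes it below -/
import Mathlib

section
/- Let n, Π be positive integers with Π dividing n, let A be a fixed n×n real matrix, and let Cart(A) be a Cartesian sketch of A. Then for any fixed bucket (h, g) ∈ {1,…,Π}², the bucket value Cart(A)_{h,g} has expectation 0 and variance at most ‖A‖_F²/Π². -/
open ProbabilityTheory MeasureTheory
open scoped ENNReal

/-- A function `f : Fin n → Fin K` is an equipartition if every fiber has
cardinality exactly `n / K`. -/
def IsEquip (n K : ℕ) (f : Fin n → Fin K) : Prop :=
  ∀ b : Fin K, (Finset.univ.filter fun a => f a = b).card = n / K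

/-- The `(h, g)` bucket of the Cartesian sketch of the matrix `A`, as a function of the
outcome `ω = (P₁, P₂, s₁, s₂)`:
`Cart(A)_{h,g} = ∑_{P₁ x = h} ∑_{P₂ y = g} s₁ x · s₂ y · A x y`. -/
def cartEntry (n K : ℕ) (A : Matrix (Fin n) (Fin n) ℝ) (h g : Fin K)
    (ω : (Fin n → Fin K) × (Fin n → Fin K) × (Fin n → ℝ) × (Fin n → ℝ)) : ℝ :=
  ∑ x, ∑ y, if ω.1 x = h ∧ ω.2.1 y = g then ω.2.2.1 x * ω.2.2.2 y * A x y else 0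

/-- The joint law of `(P₁, P₂, s₁, s₂)`: `P₁, P₂` are independent uniform random
equipartitions, and `s₁, s₂` are random sign functions with laws `σ₁, σ₂`, all four
mutually independent. -/
noncomputable def sketchMeasure (n K : ℕ) (σ₁ σ₂ : Measure (Fin n → ℝ)) :
    Measure ((Fin n → Fin K) × (Fin n → Fin K) × (Fin n → ℝ) × (Fin n → ℝ)) :=
  (uniformOn {f | IsEquip n K f}).prod
    ((uniformOn {f | IsEquip n K f}).prod (σ₁.prod σ₂))

/-!
Group the randomness of a bucket entry by entry: `Cart(A)_{h,g} = ∑ₓᵧ A x y · Vₓᵧ` with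
`Vₓᵧ = 1[P₁ x = h] · 1[P₂ y = g] · s₁ x · s₂ y`. Each of `s₁, s₂` is an isotropic random vector,
hence so is the tensor `s₁ ⊗ s₂`, and multiplying an isotropic vector coordinatewise by an
independent one preserves isotropy as long as the coordinates of the multiplier share a second
moment: correlations between the multipliers, such as those of the equipartition, are killed by the
signs. So `V` is isotropic with second moment `P(P₁ x = h) · P(P₂ y = g) = 1 / K²`, and since `V` is
centred the variance equals `‖A‖_F² / K²`.
-/

/-- A real random vector `X = (X i)ᵢ` is isotropic with scale `c` if it is square integrable and
`E[X Xᵀ] = c • 1`. It need not be centred. -/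
structure IsIsotropic {Ω ι : Type*} [MeasurableSpace Ω] (X : ι → Ω → ℝ) (c : ℝ) (μ : Measure Ω) :
    Prop where
  memLp (i : ι) : MemLp (X i) 2 μ
  integral_mul_self (i : ι) : ∫ ω, X i ω * X i ω ∂μ = c
  integral_mul_of_ne {i j : ι} (hij : i ≠ j) : ∫ ω, X i ω * X j ω ∂μ = 0

section Isotropic

variable {Ω Ω' ι κ : Type*} [MeasurableSpace Ω] [MeasurableSpace Ω'] {μ : Measure Ω}
  {ν : Measure Ω'}

theorem memLp_two_mul_prod {f : Ω → ℝ} {g : Ω' → ℝ} (hf : MemLp f 2 μ)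
    (hg : MemLp g 2 ν) : MemLp (fun ω => f ω.1 * g ω.2) 2 (μ.prod ν) := by
  refine (memLp_two_iff_integrable_sq (hf.1.comp_fst.mul hg.1.comp_snd)).2 ?_
  simpa only [Pi.mul_apply, mul_pow] using hf.integrable_sq.mul_prod hg.integrable_sq

variable [SFinite ν]

theorem integral_prod_mul_mul_mul [SFinite μ] (f f' : Ω → ℝ) (g g' : Ω' → ℝ) :
    ∫ ω, f ω.1 * g ω.2 * (f' ω.1 * g' ω.2) ∂μ.prod ν =
      (∫ ω, f ω * f' ω ∂μ) * ∫ ω, g ω * g' ω ∂ν := by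
  simp_rw [mul_mul_mul_comm]
  exact integral_prod_mul (fun ω => f ω * f' ω) fun ω => g ω * g' ω

theorem integral_mul_prod_eq_zero [SFinite μ] (f : Ω → ℝ) {g : Ω' → ℝ} (hg : ∫ ω, g ω ∂ν = 0) :
    ∫ ω, f ω.1 * g ω.2 ∂μ.prod ν = 0 := by
  rw [integral_prod_mul f g, hg, mul_zero]

namespace IsIsotropic

variable {X : ι → Ω → ℝ} {Y : κ → Ω' → ℝ} {c d : ℝ}

theorem tensor [SFinite μ] (hX : IsIsotropic X c μ) (hY : IsIsotropic Y d ν) :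
    IsIsotropic (fun (p : ι × κ) ω => X p.1 ω.1 * Y p.2 ω.2) (c * d) (μ.prod ν) where
  memLp p := memLp_two_mul_prod (hX.memLp p.1) (hY.memLp p.2)
  integral_mul_self p := by
    rw [integral_prod_mul_mul_mul, hX.integral_mul_self, hY.integral_mul_self]
  integral_mul_of_ne {p q} hpq := by
    rw [integral_prod_mul_mul_mul, mul_eq_zero]
    by_cases h₁ : p.1 = q.1
    · exact .inr (hY.integral_mul_of_ne fun h₂ => hpq (Prod.ext h₁ h₂))
    · exact .inl (hX.integral_mul_of_ne h₁)

theorem modulate [SFinite μ] {Z : κ → Ω → ℝ} (hZ : ∀ i, MemLp (Z i) 2 μ)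
    (hZc : ∀ i, ∫ ω, Z i ω * Z i ω ∂μ = c) (hY : IsIsotropic Y d ν) :
    IsIsotropic (fun i ω => Z i ω.1 * Y i ω.2) (c * d) (μ.prod ν) where
  memLp i := memLp_two_mul_prod (hZ i) (hY.memLp i)
  integral_mul_self i := by rw [integral_prod_mul_mul_mul, hZc, hY.integral_mul_self]
  integral_mul_of_ne hij := by
    rw [integral_prod_mul_mul_mul, hY.integral_mul_of_ne hij, mul_zero]

theorem indicator_modulate [IsFiniteMeasure μ] {S : κ → Set Ω} (hS : ∀ i, MeasurableSet (S i))
    (hSc : ∀ i, μ.real (S i) = c) (hY : IsIsotropic Y d ν) :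
    IsIsotropic (fun i ω => (S i).indicator 1 ω.1 * Y i ω.2) (c * d) (μ.prod ν) := by
  refine hY.modulate (fun i => memLp_indicator_const 2 (hS i) 1 (.inr (measure_ne_top μ _)))
    fun i => ?_
  have hidem : ∀ ω, (S i).indicator (1 : Ω → ℝ) ω * (S i).indicator 1 ω = (S i).indicator 1 ω :=
    fun ω => by by_cases hω : ω ∈ S i <;> simp [hω]
  simp_rw [hidem, integral_indicator_one (hS i), hSc]

theorem integral_sum_sq [Fintype ι] (hX : IsIsotropic X c μ) (a : ι → ℝ) :
    ∫ ω, (∑ i, a i * X i ω) ^ 2 ∂μ = c * ∑ i, a i ^ 2 := by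
  have hint : ∀ i j, Integrable (fun ω => a i * X i ω * (a j * X j ω)) μ := fun i j =>
    ((hX.memLp i).const_mul (a i)).integrable_mul ((hX.memLp j).const_mul (a j))
  have hmoment : ∀ i j, ∫ ω, a i * X i ω * (a j * X j ω) ∂μ =
      a i * a j * ∫ ω, X i ω * X j ω ∂μ := fun i j => by
    rw [← integral_const_mul]
    exact integral_congr_ae (.of_forall fun ω => mul_mul_mul_comm ..)
  calc ∫ ω, (∑ i, a i * X i ω) ^ 2 ∂μ
      = ∑ i, ∑ j, a i * a j * ∫ ω, X i ω * X j ω ∂μ := by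
        simp_rw [sq, Finset.sum_mul_sum]
        rw [integral_finsetSum _ fun i _ => integrable_finsetSum _ fun j _ => hint i j]
        simp_rw [integral_finsetSum _ fun j _ => hint _ j, hmoment]
    _ = ∑ i, a i * a i * c := by
        refine Finset.sum_congr rfl fun i _ => ?_
        rw [Fintype.sum_eq_single i fun j hji => by rw [hX.integral_mul_of_ne hji.symm, mul_zero],
          hX.integral_mul_self]
    _ = c * ∑ i, a i ^ 2 := by
        rw [← Finset.sum_mul, mul_comm]
        simp_rw [sq]

theorem integrable_const_mul [IsFiniteMeasure μ] (hX : IsIsotropic X c μ) (a : ℝ) (i : ι) :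
    Integrable (fun ω => a * X i ω) μ :=
  ((hX.memLp i).integrable one_le_two).const_mul a

theorem integral_sum_eq_zero [Fintype ι] [IsFiniteMeasure μ] (hX : IsIsotropic X c μ)
    (hmean : ∀ i, ∫ ω, X i ω ∂μ = 0) (a : ι → ℝ) : ∫ ω, ∑ i, a i * X i ω ∂μ = 0 := by
  simp_rw [integral_finsetSum _ fun i _ => hX.integrable_const_mul (a i) i, integral_const_mul,
    hmean, mul_zero, Finset.sum_const_zero]

theorem variance_sum [Fintype ι] [IsFiniteMeasure μ] (hX : IsIsotropic X c μ)
    (hmean : ∀ i, ∫ ω, X i ω ∂μ = 0) (a : ι → ℝ) :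
    variance (fun ω => ∑ i, a i * X i ω) μ = c * ∑ i, a i ^ 2 := by
  have hint : Integrable (fun ω => ∑ i, a i * X i ω) μ :=
    integrable_finsetSum _ fun i _ => hX.integrable_const_mul (a i) i
  rw [variance_of_integral_eq_zero hint.aemeasurable (hX.integral_sum_eq_zero hmean a),
    hX.integral_sum_sq]

end IsIsotropic

end Isotropic

section Signs

variable {Ω ι : Type*} [MeasurableSpace Ω] {μ : Measure Ω}

theorem measure_setOf_eq_of_sign {X Y : Ω → ℝ} (hX : Measurable X) (hY : Measurable Y)
    (hsign : ∀ᵐ ω ∂μ, X ω = 1 ∨ X ω = -1)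
    (hpair : ∀ a : ℝ, a = 1 ∨ a = -1 → μ {ω | X ω = a ∧ Y ω = a} = 1 / 4) :
    μ {ω | X ω = Y ω} = 1 / 2 := by
  have hae : {ω | X ω = Y ω} =ᵐ[μ]
      ({ω | X ω = 1 ∧ Y ω = 1} ∪ {ω | X ω = -1 ∧ Y ω = -1} : Set Ω) := by
    filter_upwards [hsign] with ω hω
    refine propext (?_ : X ω = Y ω ↔ X ω = 1 ∧ Y ω = 1 ∨ X ω = -1 ∧ Y ω = -1)
    grind
  have hdisj : Disjoint {ω | X ω = 1 ∧ Y ω = 1} {ω | X ω = -1 ∧ Y ω = -1} :=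
    Set.disjoint_left.2 fun ω hpos hneg => by
      linarith [hpos.1.symm.trans hneg.1]
  have hmeas : MeasurableSet {ω | X ω = -1 ∧ Y ω = -1} :=
    (hX (measurableSet_singleton (-1))).inter (hY (measurableSet_singleton (-1)))
  rw [measure_congr hae, measure_union hdisj hmeas, hpair 1 (.inl rfl), hpair (-1) (.inr rfl)]
  exact (ENNReal.toReal_eq_toReal_iff' (by simp) (by simp)).1 (by norm_num [ENNReal.toReal_add])

variable [IsProbabilityMeasure μ]

theorem integral_eq_zero_of_sign {X : Ω → ℝ} (hX : Measurable X)
    (hsign : ∀ᵐ ω ∂μ, X ω = 1 ∨ X ω = -1) (hhalf : μ {ω | X ω = 1} = 1 / 2) :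
    ∫ ω, X ω ∂μ = 0 := by
  have hmeas : MeasurableSet {ω | X ω = 1} := hX (measurableSet_singleton 1)
  have hae : X =ᵐ[μ] fun ω => 2 * {ω | X ω = 1}.indicator 1 ω - 1 := by
    filter_upwards [hsign] with ω hω
    rcases hω with h | h <;> norm_num [Set.indicator_apply, h]
  have hint : Integrable ({ω | X ω = 1}.indicator (1 : Ω → ℝ)) μ :=
    (integrable_const 1).indicator hmeas
  rw [integral_congr_ae hae, integral_sub (hint.const_mul 2) (integrable_const 1),
    integral_const_mul, integral_indicator_one hmeas, measureReal_def, hhalf]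
  simp

theorem isIsotropic_of_sign {ε : ι → Ω → ℝ} (hε : ∀ i, Measurable (ε i))
    (hsign : ∀ᵐ ω ∂μ, ∀ i, ε i ω = 1 ∨ ε i ω = -1)
    (hpair : ∀ i j, i ≠ j → ∀ a : ℝ, a = 1 ∨ a = -1 → μ {ω | ε i ω = a ∧ ε j ω = a} = 1 / 4) :
    IsIsotropic ε 1 μ where
  memLp i := by
    refine .of_bound (hε i).aestronglyMeasurable 1 ?_
    filter_upwards [hsign] with ω hω
    rcases hω i with h | h <;> simp [h]
  integral_mul_self i := by
    have hsq : (fun ω => ε i ω * ε i ω) =ᵐ[μ] fun _ => 1 := by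
      filter_upwards [hsign] with ω hω
      exact mul_self_eq_one_iff.2 (hω i)
    simp [integral_congr_ae hsq]
  integral_mul_of_ne {i j} hij := by
    have hprod : ∀ᵐ ω ∂μ, ε i ω * ε j ω = 1 ∨ ε i ω * ε j ω = -1 := by
      filter_upwards [hsign] with ω hω
      rcases hω i with hi | hi <;> rcases hω j with hj | hj <;> simp [hi, hj]
    have hagree : {ω | ε i ω * ε j ω = 1} =ᵐ[μ] {ω | ε i ω = ε j ω} := by
      filter_upwards [hsign] with ω hω
      refine propext (?_ : ε i ω * ε j ω = 1 ↔ ε i ω = ε j ω)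
      rcases hω i with hi | hi <;> rcases hω j with hj | hj <;> norm_num [hi, hj]
    refine integral_eq_zero_of_sign ((hε i).mul (hε j)) hprod ?_
    rw [measure_congr hagree]
    exact measure_setOf_eq_of_sign (hε i) (hε j) (hsign.mono fun ω hω => hω i) (hpair i j hij)

end Signs

section Equipartition

theorem uniformOn_preimage_equiv {Ω : Type*} [MeasurableSpace Ω] [MeasurableSingletonClass Ω]
    {s : Set Ω} (hs : MeasurableSet s) (e : Ω ≃ Ω) (he : e ⁻¹' s = s) (t : Set Ω) :
    uniformOn s (e ⁻¹' t) = uniformOn s t := by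
  have himage : e '' (s ∩ e ⁻¹' t) = s ∩ t := by
    rw [Set.image_inter_preimage, ← he, e.image_preimage, he]
  rw [uniformOn, cond_apply hs, cond_apply hs, ← himage, Measure.count_injective_image e.injective]

variable {n K : ℕ}

theorem exists_isEquip (hdvd : K ∣ n) : ∃ f, IsEquip n K f := by
  obtain ⟨m, rfl⟩ := hdvd
  refine ⟨fun a => (finProdFinEquiv.symm a).1, fun b => ?_⟩
  rw [Nat.mul_div_cancel_left m b.pos]
  calc (Finset.univ.filter fun a : Fin (K * m) => (finProdFinEquiv.symm a).1 = b).card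
      = (({b} : Finset (Fin K)) ×ˢ (Finset.univ : Finset (Fin m))).card :=
        Finset.card_equiv finProdFinEquiv.symm fun a => by
          simp only [Finset.mem_filter_univ, Finset.mem_product, Finset.mem_singleton,
            Finset.mem_univ, and_true]
    _ = m := by rw [Finset.card_product, Finset.card_singleton, Finset.card_fin, one_mul]

theorem isEquip_perm_comp_iff {f : Fin n → Fin K} (e : Equiv.Perm (Fin K)) :
    IsEquip n K (e ∘ f) ↔ IsEquip n K f := by
  simp only [IsEquip, Function.comp_apply, ← Equiv.eq_symm_apply]
  exact e.symm.forall_congr_right (q := fun b => (Finset.univ.filter fun a => f a = b).card = n / K)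

theorem isProbabilityMeasure_uniformOn_isEquip (hdvd : K ∣ n) :
    IsProbabilityMeasure (uniformOn {f | IsEquip n K f}) :=
  isProbabilityMeasure_uniformOn (Set.toFinite _) (exists_isEquip hdvd)

theorem uniformOn_isEquip_apply_eq (x : Fin n) (h h' : Fin K) :
    uniformOn {f | IsEquip n K f} {f | f x = h} =
      uniformOn {f | IsEquip n K f} {f | f x = h'} := by
  let relabel : (Fin n → Fin K) ≃ (Fin n → Fin K) := Equiv.arrowCongr (.refl _) (Equiv.swap h h')
  have hequip : relabel ⁻¹' {f | IsEquip n K f} = {f | IsEquip n K f} :=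
    Set.ext fun f => isEquip_perm_comp_iff (Equiv.swap h h')
  have hfiber : relabel ⁻¹' {f | f x = h'} = {f | f x = h} :=
    Set.ext fun f => by simp [relabel, Equiv.swap_apply_eq_iff]
  rw [← hfiber, uniformOn_preimage_equiv (Set.toFinite _).measurableSet relabel hequip]

theorem uniformOn_isEquip_real_apply_eq (hdvd : K ∣ n) (x : Fin n) (h : Fin K) :
    (uniformOn {f | IsEquip n K f}).real {f | f x = h} = 1 / K := by
  have := isProbabilityMeasure_uniformOn_isEquip hdvd
  have hsum : ∑ b, (uniformOn {f | IsEquip n K f}).real {f | f x = b} = 1 :=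
    (sum_measureReal_preimage_singleton Finset.univ fun _ _ =>
      (Set.toFinite _).measurableSet).trans (by simp)
  have hconst : ∀ b, (uniformOn {f | IsEquip n K f}).real {f | f x = b} =
      (uniformOn {f | IsEquip n K f}).real {f | f x = h} := fun b => by
    rw [measureReal_def, uniformOn_isEquip_apply_eq x b h, measureReal_def]
  have hK : (K : ℝ) ≠ 0 := Nat.cast_ne_zero.2 h.pos.ne'
  rw [Fintype.sum_congr _ _ hconst, Finset.sum_const, Finset.card_fin, nsmul_eq_mul] at hsum
  rwa [eq_div_iff hK, mul_comm]

end Equipartition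

section Sketch

variable {n K : ℕ} {π₁ π₂ : Measure (Fin n → Fin K)} {σ₁ σ₂ : Measure (Fin n → ℝ)}

/-- The random coefficient of the entry `A p.1 p.2` in the bucket `(h, g)`, as a function of the
outcome `ω = (P₁, P₂, s₁, s₂)`. Its factors are nested like the product measure. -/
noncomputable def bucketCoeff (h g : Fin K) (p : Fin n × Fin n)
    (ω : (Fin n → Fin K) × (Fin n → Fin K) × (Fin n → ℝ) × (Fin n → ℝ)) : ℝ :=
  {f : Fin n → Fin K | f p.1 = h}.indicator 1 ω.1 *
    ({f : Fin n → Fin K | f p.2 = g}.indicator 1 ω.2.1 * (ω.2.2.1 p.1 * ω.2.2.2 p.2))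

theorem cartEntry_eq_sum_bucketCoeff (A : Matrix (Fin n) (Fin n) ℝ) (h g : Fin K) :
    cartEntry n K A h g = fun ω => ∑ p : Fin n × Fin n, A p.1 p.2 * bucketCoeff h g p ω := by
  funext ω
  rw [cartEntry, Fintype.sum_prod_type]
  refine Finset.sum_congr rfl fun x _ => Finset.sum_congr rfl fun y _ => ?_
  by_cases hx : ω.1 x = h <;> by_cases hy : ω.2.1 y = g <;>
    simp [bucketCoeff, hx, hy, mul_comm]

theorem isIsotropic_bucketCoeff [IsFiniteMeasure π₁] [IsFiniteMeasure π₂] [SFinite σ₁] [SFinite σ₂]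
    {h g : Fin K} {p q c d : ℝ} (hπ₁ : ∀ x, π₁.real {f | f x = h} = p)
    (hπ₂ : ∀ y, π₂.real {f | f y = g} = q) (hσ₁ : IsIsotropic (fun i s => s i) c σ₁)
    (hσ₂ : IsIsotropic (fun i s => s i) d σ₂) :
    IsIsotropic (bucketCoeff h g) (p * (q * (c * d))) (π₁.prod (π₂.prod (σ₁.prod σ₂))) := by
  have hcols := (hσ₁.tensor hσ₂).indicator_modulate (S := fun i => {f : Fin n → Fin K | f i.2 = g})
    (fun _ => (Set.toFinite _).measurableSet) fun i => hπ₂ i.2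
  exact hcols.indicator_modulate (S := fun i => {f : Fin n → Fin K | f i.1 = h})
    (fun _ => (Set.toFinite _).measurableSet) fun i => hπ₁ i.1

theorem integral_bucketCoeff [SFinite π₁] [SFinite π₂] [SFinite σ₁] [SFinite σ₂] (h g : Fin K)
    (hσ₂ : ∀ y, ∫ s, s y ∂σ₂ = 0) (p : Fin n × Fin n) :
    ∫ ω, bucketCoeff h g p ω ∂π₁.prod (π₂.prod (σ₁.prod σ₂)) = 0 := by
  have hsigns := integral_mul_prod_eq_zero (μ := σ₁) (fun s => s p.1) (hσ₂ p.2)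
  have hcols := integral_mul_prod_eq_zero (μ := π₂)
    ({f : Fin n → Fin K | f p.2 = g}.indicator 1) hsigns
  exact integral_mul_prod_eq_zero (μ := π₁) ({f : Fin n → Fin K | f p.1 = h}.indicator 1) hcols

theorem cart_sketch_mean_variance_general (A : Matrix (Fin n) (Fin n) ℝ)
    [IsProbabilityMeasure π₁] [IsProbabilityMeasure π₂]
    [IsProbabilityMeasure σ₁] [IsProbabilityMeasure σ₂] {h g : Fin K} {p q : ℝ}
    (hπ₁ : ∀ x, π₁.real {f | f x = h} = p) (hπ₂ : ∀ y, π₂.real {f | f y = g} = q)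
    (hσ₁ : IsIsotropic (fun i s => s i) 1 σ₁) (hσ₂ : IsIsotropic (fun i s => s i) 1 σ₂)
    (hmean₂ : ∀ y, ∫ s, s y ∂σ₂ = 0) :
    (∫ ω, cartEntry n K A h g ω ∂π₁.prod (π₂.prod (σ₁.prod σ₂))) = 0 ∧
      variance (cartEntry n K A h g) (π₁.prod (π₂.prod (σ₁.prod σ₂))) =
        p * q * ∑ x, ∑ y, A x y ^ 2 := by
  rw [cartEntry_eq_sum_bucketCoeff, ← Fintype.sum_prod_type']
  have hiso := isIsotropic_bucketCoeff hπ₁ hπ₂ hσ₁ hσ₂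
  rw [mul_one, mul_one] at hiso
  have hmean := integral_bucketCoeff (π₁ := π₁) (π₂ := π₂) (σ₁ := σ₁) h g hmean₂
  exact ⟨hiso.integral_sum_eq_zero hmean fun i => A i.1 i.2,
    hiso.variance_sum hmean fun i => A i.1 i.2⟩

end Sketch

/-- For a fixed `n × n` matrix `A` and a Cartesian sketch built from
independent uniform random equipartitions `P₁, P₂` and random sign functions `s₁, s₂`
whose values are uniform on `{−1,+1}` and pairwise independent, each fixed bucket value
`Cart(A)_{h,g}` has expectation `0` and variance at most `‖A‖_F² / K²`. -/
theorem cart_sketch_mean_variance (n K : ℕ) (hn : 0 < n) (hK : 0 < K) (hdvd : K ∣ n)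
    (A : Matrix (Fin n) (Fin n) ℝ)
    (σ₁ σ₂ : Measure (Fin n → ℝ)) [IsProbabilityMeasure σ₁] [IsProbabilityMeasure σ₂]
    (hval₁ : ∀ᵐ s ∂σ₁, ∀ i, s i = 1 ∨ s i = -1)
    (hval₂ : ∀ᵐ s ∂σ₂, ∀ i, s i = 1 ∨ s i = -1)
    (huni₁ : ∀ i, σ₁ {s | s i = 1} = 1 / 2)
    (huni₂ : ∀ i, σ₂ {s | s i = 1} = 1 / 2)
    (hpair₁ : ∀ i j : Fin n, i ≠ j → ∀ a b : ℝ, (a = 1 ∨ a = -1) → (b = 1 ∨ b = -1) →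
      σ₁ {s | s i = a ∧ s j = b} = 1 / 4)
    (hpair₂ : ∀ i j : Fin n, i ≠ j → ∀ a b : ℝ, (a = 1 ∨ a = -1) → (b = 1 ∨ b = -1) →
      σ₂ {s | s i = a ∧ s j = b} = 1 / 4)
    (h g : Fin K) :
    (∫ ω, cartEntry n K A h g ω ∂(sketchMeasure n K σ₁ σ₂)) = 0 ∧
      variance (cartEntry n K A h g) (sketchMeasure n K σ₁ σ₂) ≤
        (∑ x, ∑ y, A x y ^ 2) / K ^ 2 := by
  have := isProbabilityMeasure_uniformOn_isEquip hdvd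
  have hiso₁ : IsIsotropic (fun i s => s i) 1 σ₁ := isIsotropic_of_sign measurable_pi_apply hval₁
    fun i j hij a ha => hpair₁ i j hij a a ha ha
  have hiso₂ : IsIsotropic (fun i s => s i) 1 σ₂ := isIsotropic_of_sign measurable_pi_apply hval₂
    fun i j hij a ha => hpair₂ i j hij a a ha ha
  have hmean₂ : ∀ i, ∫ s, s i ∂σ₂ = 0 := fun i =>
    integral_eq_zero_of_sign (measurable_pi_apply i) (hval₂.mono fun _ hs => hs i) (huni₂ i)
  obtain ⟨hmean, hvar⟩ := cart_sketch_mean_variance_general A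
    (uniformOn_isEquip_real_apply_eq hdvd · h) (uniformOn_isEquip_real_apply_eq hdvd · g)
    hiso₁ hiso₂ hmean₂
  refine ⟨hmean, (hvar.trans ?_).le⟩
  rw [one_div_mul_one_div, one_div_mul_eq_div, sq]
end

section
/- Let n, Π be positive integers with Π dividing n, let A be a fixed n×n real matrix, let Cart(A) be a Cartesian sketch of A, and let φ > 0. Then for any fixed bucket (h, g) ∈ {1,…,Π}², the probability that |Cart(A)_{h,g}| ≥ φ/4 is at most 16·‖A‖_F²/(Π²·φ²). -/
open ProbabilityTheory MeasureTheory
open scoped ENNReal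

/-!
The weight `1[P₁ x = h] · 1[P₂ y = g] · s₁ x · s₂ y` of `A x y` in the bucket is the product of a
mask depending on `(P₁, P₂)` and an independent product of signs. Products of independent orthogonal
families are orthogonal, and independent masks preserve orthogonality, so the second moment of the
bucket has no cross terms: it is `∑ A x y ^ 2 · ℙ(P₁ x = h) · ℙ(P₂ y = g)`. Relabelling the classes
shows that both probabilities are at most `1 / K`, and Chebyshev's inequality concludes.
-/

section OrthogonalFamily

variable {Ω Ω' ι κ : Type*} [MeasurableSpace Ω] [MeasurableSpace Ω'] {μ : Measure Ω}
  {ν : Measure Ω'}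

/-- The random variables `Z k` are pairwise orthogonal in `L²(μ)` with second moments `w k`; they
need not be centered. -/
structure IsOrthogonalFamily [DecidableEq κ] (Z : κ → Ω → ℝ) (w : κ → ℝ) (μ : Measure Ω) :
    Prop where
  memLp : ∀ k, MemLp (Z k) 2 μ
  integral_mul : ∀ k l, ∫ ω, Z k ω * Z l ω ∂μ = if k = l then w k else 0

lemma memLp_two_prod_mul {f : Ω → ℝ} {g : Ω' → ℝ} (hf : MemLp f 2 μ) (hg : MemLp g 2 ν) :
    MemLp (fun z : Ω × Ω' => f z.1 * g z.2) 2 (μ.prod ν) := by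
  have hmeas : AEStronglyMeasurable (fun z : Ω × Ω' => f z.1 * g z.2) (μ.prod ν) :=
    hf.1.comp_fst.mul hg.1.comp_snd
  rw [memLp_two_iff_integrable_sq hmeas]
  simpa only [mul_pow] using hf.integrable_sq.mul_prod hg.integrable_sq

lemma integral_prod_mul_mul_prod_mul [SFinite μ] [SFinite ν] (f f' : Ω → ℝ) (g g' : Ω' → ℝ) :
    ∫ z, f z.1 * g z.2 * (f' z.1 * g' z.2) ∂μ.prod ν =
      (∫ ω, f ω * f' ω ∂μ) * ∫ ω, g ω * g' ω ∂ν := by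
  rw [← integral_prod_mul]
  exact integral_congr_ae (ae_of_all _ fun z => mul_mul_mul_comm _ _ _ _)

lemma measure_ge_abs_le_integral_sq_div {X : Ω → ℝ} (hX : MemLp X 2 μ) {t : ℝ} (ht : 0 < t) :
    μ {ω | t ≤ |X ω|} ≤ ENNReal.ofReal ((∫ ω, X ω ^ 2 ∂μ) / t ^ 2) := by
  have hset : {ω | t ≤ |X ω|} = {ω | t ^ 2 ≤ X ω ^ 2} := by
    ext ω
    rw [Set.mem_ofPred_eq, Set.mem_ofPred_eq, sq_le_sq, abs_of_pos ht]
  rw [hset, ← ofReal_measureReal (hX.integrable_sq.measure_ge_lt_top (by positivity)).ne]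
  refine ENNReal.ofReal_le_ofReal ?_
  rw [le_div_iff₀' (by positivity)]
  exact mul_meas_ge_le_integral_of_nonneg (ae_of_all _ fun ω => sq_nonneg (X ω))
    hX.integrable_sq (t ^ 2)

namespace IsOrthogonalFamily

variable [DecidableEq ι] [DecidableEq κ] {Z : κ → Ω → ℝ} {w : κ → ℝ}

lemma prod_mul [SFinite μ] [SFinite ν] {T : ι → Ω' → ℝ} {v : ι → ℝ}
    (hZ : IsOrthogonalFamily Z w μ) (hT : IsOrthogonalFamily T v ν) :
    IsOrthogonalFamily (fun (k : κ × ι) (z : Ω × Ω') => Z k.1 z.1 * T k.2 z.2)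
      (fun k => w k.1 * v k.2) (μ.prod ν) where
  memLp k := memLp_two_prod_mul (hZ.memLp k.1) (hT.memLp k.2)
  integral_mul k l := by
    rw [integral_prod_mul_mul_prod_mul, hZ.integral_mul, hT.integral_mul, ite_zero_mul_ite_zero]
    simp only [Prod.ext_iff]

lemma mask_mul [SFinite μ] [SFinite ν] {B : κ → Ω' → ℝ} (hB : ∀ k, MemLp (B k) 2 ν)
    (hZ : IsOrthogonalFamily Z w μ) :
    IsOrthogonalFamily (fun k (z : Ω' × Ω) => B k z.1 * Z k z.2)
      (fun k => (∫ ω, B k ω ^ 2 ∂ν) * w k) (ν.prod μ) where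
  memLp k := memLp_two_prod_mul (hB k) (hZ.memLp k)
  integral_mul k l := by
    rw [integral_prod_mul_mul_prod_mul, hZ.integral_mul, mul_ite_zero]
    refine if_ctx_congr Iff.rfl (fun hkl => ?_) fun _ => rfl
    simp only [← hkl, sq]

variable [Fintype κ]

lemma memLp_sum (hZ : IsOrthogonalFamily Z w μ) (a : κ → ℝ) :
    MemLp (fun ω => ∑ k, a k * Z k ω) 2 μ :=
  memLp_finsetSum _ fun k _ => (hZ.memLp k).const_mul (a k)

lemma integral_sum_sq (hZ : IsOrthogonalFamily Z w μ) (a : κ → ℝ) :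
    ∫ ω, (∑ k, a k * Z k ω) ^ 2 ∂μ = ∑ k, a k ^ 2 * w k := by
  have hint : ∀ k l, Integrable (fun ω => a k * a l * (Z k ω * Z l ω)) μ := fun k l =>
    ((hZ.memLp k).integrable_mul (hZ.memLp l)).const_mul _
  calc ∫ ω, (∑ k, a k * Z k ω) ^ 2 ∂μ
      = ∫ ω, ∑ k, ∑ l, a k * a l * (Z k ω * Z l ω) ∂μ := by
        simp only [sq, Finset.sum_mul_sum, mul_mul_mul_comm]
    _ = ∑ k, ∑ l, a k * a l * ∫ ω, Z k ω * Z l ω ∂μ := by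
        rw [integral_finsetSum _ fun k _ => integrable_finsetSum _ fun l _ => hint k l]
        simp only [integral_finsetSum _ fun l _ => hint _ l, integral_const_mul]
    _ = ∑ k, a k ^ 2 * w k := by
        simp only [hZ.integral_mul, mul_ite_zero, Finset.sum_ite_eq, Finset.mem_univ, if_true, sq]

lemma measure_ge_abs_sum_le (hZ : IsOrthogonalFamily Z w μ) (a : κ → ℝ) {t : ℝ} (ht : 0 < t) :
    μ {ω | t ≤ |∑ k, a k * Z k ω|} ≤ ENNReal.ofReal ((∑ k, a k ^ 2 * w k) / t ^ 2) :=
  hZ.integral_sum_sq a ▸ measure_ge_abs_le_integral_sq_div (hZ.memLp_sum a) ht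

end IsOrthogonalFamily

end OrthogonalFamily

section Signs

variable {Ω ι : Type*} [MeasurableSpace Ω] {μ : Measure Ω}

lemma integral_mul_eq_zero_of_uniform_signs [IsFiniteMeasure μ] {X Y : Ω → ℝ}
    (hX : Measurable X) (hY : Measurable Y) (hXval : ∀ᵐ ω ∂μ, X ω = 1 ∨ X ω = -1)
    (hYval : ∀ᵐ ω ∂μ, Y ω = 1 ∨ Y ω = -1) {c : ℝ≥0∞}
    (hpair : ∀ a b : ℝ, (a = 1 ∨ a = -1) → (b = 1 ∨ b = -1) → μ {ω | X ω = a ∧ Y ω = b} = c) :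
    ∫ ω, X ω * Y ω ∂μ = 0 := by
  let signs : Finset ℝ := {1, -1}
  have hXY : Measurable fun ω => (X ω, Y ω) := hX.prodMk hY
  have hatom : ∀ z ∈ signs ×ˢ signs, (μ.map fun ω => (X ω, Y ω)).real {z} = c.toReal := by
    rintro ⟨a, b⟩ hz
    simp only [signs, Finset.mem_product, Finset.mem_insert, Finset.mem_singleton] at hz
    rw [map_measureReal_apply hXY (measurableSet_singleton _), measureReal_def,
      ← hpair a b hz.1 hz.2]
    simp only [Set.preimage, Set.mem_singleton_iff, Prod.mk.injEq]
  have hsupp : ∀ᵐ z ∂μ.map fun ω => (X ω, Y ω), z ∈ (signs ×ˢ signs : Finset (ℝ × ℝ)) := by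
    refine (ae_map_iff hXY.aemeasurable (signs ×ˢ signs).measurableSet).2 ?_
    filter_upwards [hXval, hYval] with ω hω hω'
    simpa [signs] using ⟨hω, hω'⟩
  calc ∫ ω, X ω * Y ω ∂μ
      = ∫ z, z.1 * z.2 ∂μ.map fun ω => (X ω, Y ω) :=
        (integral_map hXY.aemeasurable
          (measurable_fst.mul measurable_snd).aestronglyMeasurable).symm
    _ = ∫ z in (signs ×ˢ signs : Finset (ℝ × ℝ)), z.1 * z.2 ∂μ.map fun ω => (X ω, Y ω) := by
        rw [Measure.restrict_eq_self_of_ae_mem hsupp]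
    _ = ∑ z ∈ signs ×ˢ signs, c.toReal * (z.1 * z.2) := by
        rw [setIntegral_finset _ IntegrableOn.finset]
        exact Finset.sum_congr rfl fun z hz => by rw [hatom z hz, smul_eq_mul]
    _ = c.toReal * ((∑ a ∈ signs, a) * ∑ b ∈ signs, b) := by
        rw [← Finset.mul_sum, Finset.sum_mul_sum, Finset.sum_product]
    _ = 0 := by
        have hsum : ∑ a ∈ signs, a = 0 := by norm_num [signs]
        rw [hsum, zero_mul, mul_zero]

lemma isOrthogonalFamily_of_uniform_signs [DecidableEq ι] [IsProbabilityMeasure μ]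
    {X : ι → Ω → ℝ} (hX : ∀ i, Measurable (X i)) (hval : ∀ i, ∀ᵐ ω ∂μ, X i ω = 1 ∨ X i ω = -1)
    {c : ℝ≥0∞} (hpair : ∀ i j, i ≠ j → ∀ a b : ℝ, (a = 1 ∨ a = -1) → (b = 1 ∨ b = -1) →
      μ {ω | X i ω = a ∧ X j ω = b} = c) :
    IsOrthogonalFamily X 1 μ where
  memLp i := .of_bound (hX i).aestronglyMeasurable 1 <| by
    filter_upwards [hval i] with ω hω
    rcases hω with hω | hω <;> simp [hω]
  integral_mul i j := by
    split_ifs with hij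
    · subst hij
      have hsq : (fun ω => X i ω * X i ω) =ᵐ[μ] fun _ => 1 := by
        filter_upwards [hval i] with ω hω
        rcases hω with hω | hω <;> simp [hω]
      simp [integral_congr_ae hsq]
    · exact integral_mul_eq_zero_of_uniform_signs (hX i) (hX j) (hval i) (hval j) (hpair i j hij)

end Signs

section Partition

variable {Ω ι α : Type*} [MeasurableSpace Ω] [MeasurableSpace α] [MeasurableSingletonClass α]

lemma uniformOn_eval_eq_of_perm_comp_mem [Finite ι] [Finite α] {S : Set (ι → α)}
    (hS : ∀ P ∈ S, ∀ e : Equiv.Perm α, e ∘ P ∈ S) (x : ι) (h h' : α) :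
    uniformOn S {P | P x = h} = uniformOn S {P | P x = h'} := by
  classical
  have hle : ∀ a b, uniformOn S {P | P x = a} ≤ uniformOn S {P | P x = b} := fun a b => by
    rw [uniformOn, cond_apply S.toFinite.measurableSet, cond_apply S.toFinite.measurableSet,
      ← Measure.count_injective_image (Equiv.swap a b).injective.comp_left (S ∩ {P | P x = a})]
    gcongr
    rintro _ ⟨P, ⟨hP, hPx⟩, rfl⟩
    exact ⟨hS P hP _, (congrArg _ hPx).trans (Equiv.swap_apply_left a b)⟩
  exact le_antisymm (hle h h') (hle h' h)

lemma measureReal_preimage_singleton_le_inv_card [Fintype α] {μ : Measure Ω}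
    [IsZeroOrProbabilityMeasure μ] {X : Ω → α} (hX : Measurable X) {h : α}
    (hsymm : ∀ b, μ.real (X ⁻¹' {b}) = μ.real (X ⁻¹' {h})) :
    μ.real (X ⁻¹' {h}) ≤ (Fintype.card α : ℝ)⁻¹ := by
  have : Nonempty α := ⟨h⟩
  have hcard : Fintype.card α * μ.real (X ⁻¹' {h}) ≤ 1 :=
    calc Fintype.card α * μ.real (X ⁻¹' {h}) = ∑ b, μ.real (X ⁻¹' {b}) := by
          simp only [hsymm, Finset.sum_const, Finset.card_univ, nsmul_eq_mul]
      _ = μ.real (X ⁻¹' (Finset.univ : Finset α)) :=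
          sum_measureReal_preimage_singleton _ fun b _ => hX (measurableSet_singleton b)
      _ ≤ 1 := measureReal_le_one
  rwa [← one_div, le_div_iff₀' (by positivity)]

lemma uniformOn_real_eval_eq_le_inv_card [Finite ι] [Fintype α] {S : Set (ι → α)}
    (hS : ∀ P ∈ S, ∀ e : Equiv.Perm α, e ∘ P ∈ S) (x : ι) (h : α) :
    (uniformOn S).real {P | P x = h} ≤ (Fintype.card α : ℝ)⁻¹ :=
  measureReal_preimage_singleton_le_inv_card (measurable_pi_apply x) fun b =>
    congrArg ENNReal.toReal (uniformOn_eval_eq_of_perm_comp_mem hS x b h)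

end Partition

lemma IsEquip.perm_comp {n K : ℕ} {P : Fin n → Fin K} (hP : IsEquip n K P)
    (e : Equiv.Perm (Fin K)) : IsEquip n K (e ∘ P) := by
  intro b
  rw [← hP (e.symm b)]
  simp only [Function.comp_apply, Equiv.eq_symm_apply]

lemma uniformOn_isEquip_real_eval_eq_le_inv {n K : ℕ} (x : Fin n) (h : Fin K) :
    (uniformOn {P | IsEquip n K P}).real {P | P x = h} ≤ (K : ℝ)⁻¹ := by
  simpa only [Fintype.card_fin] using uniformOn_real_eval_eq_le_inv_card
    (S := {P | IsEquip n K P}) (fun _ hP => IsEquip.perm_comp hP) x h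

section Sketch

variable {ι κ α β : Type*}

/-- The `(h, g)` bucket of the Cartesian sketch of a rectangular matrix `A` whose rows and columns
are partitioned into classes labelled by `α` and `β`; `cartEntry` is the case of `Fin`-indexed
square matrices. -/
def sketchEntry [Fintype ι] [Fintype κ] [DecidableEq α] [DecidableEq β] (A : Matrix ι κ ℝ) (h : α)
    (g : β) (ω : (ι → α) × (κ → β) × (ι → ℝ) × (κ → ℝ)) : ℝ :=
  ∑ x, ∑ y, if ω.1 x = h ∧ ω.2.1 y = g then ω.2.2.1 x * ω.2.2.2 y * A x y else 0

/-- The indicator, as a function of the partition `P`, of the event that `x` lies in class `h`. -/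
noncomputable def classIndicator (h : α) (x : ι) : (ι → α) → ℝ :=
  {P | P x = h}.indicator 1

lemma sketchEntry_eq_sum [Fintype ι] [Fintype κ] [DecidableEq α] [DecidableEq β]
    (A : Matrix ι κ ℝ) (h : α) (g : β) (ω : (ι → α) × (κ → β) × (ι → ℝ) × (κ → ℝ)) :
    sketchEntry A h g ω = ∑ k : ι × κ, A k.1 k.2 * (classIndicator h k.1 ω.1 *
      (classIndicator g k.2 ω.2.1 * (ω.2.2.1 k.1 * ω.2.2.2 k.2))) := by
  rw [Fintype.sum_prod_type]
  refine Finset.sum_congr rfl fun x _ => Finset.sum_congr rfl fun y _ => ?_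
  by_cases hx : ω.1 x = h <;> by_cases hy : ω.2.1 y = g <;>
    simp [classIndicator, hx, hy, mul_comm]

variable [MeasurableSpace α] [MeasurableSingletonClass α] [MeasurableSpace β]
  [MeasurableSingletonClass β]

lemma measurableSet_eval_eq (h : α) (x : ι) : MeasurableSet {P : ι → α | P x = h} :=
  (measurableSet_singleton h).preimage (measurable_pi_apply x)

lemma memLp_classIndicator (μ : Measure (ι → α)) [IsFiniteMeasure μ] (h : α) (x : ι) :
    MemLp (classIndicator h x) 2 μ :=
  memLp_indicator_const 2 (measurableSet_eval_eq h x) 1 (.inr (measure_ne_top μ _))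

lemma integral_classIndicator_sq (μ : Measure (ι → α)) (h : α) (x : ι) :
    ∫ P, classIndicator h x P ^ 2 ∂μ = μ.real {P | P x = h} := by
  have hsq : ∀ P, classIndicator h x P ^ 2 = {P | P x = h}.indicator 1 P := fun P => by
    by_cases hP : P x = h <;> simp [classIndicator, hP]
  simp only [hsq, integral_indicator_one (measurableSet_eval_eq h x)]

theorem cart_sketch_tail_bound_general [Fintype ι] [Fintype κ] [DecidableEq ι] [DecidableEq κ]
    [DecidableEq α] [DecidableEq β] (A : Matrix ι κ ℝ) {t : ℝ} (ht : 0 < t)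
    {μ₁ : Measure (ι → α)} {μ₂ : Measure (κ → β)} [IsFiniteMeasure μ₁] [IsFiniteMeasure μ₂]
    {σ₁ : Measure (ι → ℝ)} {σ₂ : Measure (κ → ℝ)} [SFinite σ₁] [SFinite σ₂]
    {p q : ℝ} {h : α} {g : β}
    (hμ₁ : ∀ x, μ₁.real {P | P x = h} ≤ p) (hμ₂ : ∀ y, μ₂.real {P | P y = g} ≤ q)
    (hσ₁ : IsOrthogonalFamily (fun x s => s x) 1 σ₁)
    (hσ₂ : IsOrthogonalFamily (fun y s => s y) 1 σ₂) :
    μ₁.prod (μ₂.prod (σ₁.prod σ₂)) {ω | t ≤ |sketchEntry A h g ω|} ≤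
      ENNReal.ofReal (p * q * (∑ x, ∑ y, A x y ^ 2) / t ^ 2) := by
  have horth := ((hσ₁.prod_mul hσ₂).mask_mul fun k => memLp_classIndicator μ₂ g k.2).mask_mul
    fun k => memLp_classIndicator μ₁ h k.1
  simp only [sketchEntry_eq_sum]
  refine (horth.measure_ge_abs_sum_le _ ht).trans (ENNReal.ofReal_le_ofReal ?_)
  simp only [integral_classIndicator_sq, Pi.one_apply, mul_one]
  rw [← Fintype.sum_prod_type' fun x y => A x y ^ 2, mul_comm (p * q), Finset.sum_mul]
  gcongr with k
  · exact measureReal_nonneg.trans (hμ₁ k.1)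
  · exact hμ₁ k.1
  · exact hμ₂ k.2

end Sketch

/-- For a fixed `n × n` matrix `A`, a Cartesian sketch built from
independent uniform random equipartitions and pairwise independent uniform random signs,
a fixed bucket `(h, g)` and `φ > 0`, the probability that `|Cart(A)_{h,g}| ≥ φ/4` is at
most `16‖A‖_F² / (K²φ²)`. -/
theorem cart_sketch_tail_bound (n K : ℕ) (hn : 0 < n) (hK : 0 < K) (hdvd : K ∣ n)
    (A : Matrix (Fin n) (Fin n) ℝ) (φ : ℝ) (hφ : 0 < φ)
    (σ₁ σ₂ : Measure (Fin n → ℝ)) [IsProbabilityMeasure σ₁] [IsProbabilityMeasure σ₂]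
    (hval₁ : ∀ᵐ s ∂σ₁, ∀ i, s i = 1 ∨ s i = -1)
    (hval₂ : ∀ᵐ s ∂σ₂, ∀ i, s i = 1 ∨ s i = -1)
    (huni₁ : ∀ i, σ₁ {s | s i = 1} = 1 / 2)
    (huni₂ : ∀ i, σ₂ {s | s i = 1} = 1 / 2)
    (hpair₁ : ∀ i j : Fin n, i ≠ j → ∀ a b : ℝ, (a = 1 ∨ a = -1) → (b = 1 ∨ b = -1) →
      σ₁ {s | s i = a ∧ s j = b} = 1 / 4)
    (hpair₂ : ∀ i j : Fin n, i ≠ j → ∀ a b : ℝ, (a = 1 ∨ a = -1) → (b = 1 ∨ b = -1) →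
      σ₂ {s | s i = a ∧ s j = b} = 1 / 4)
    (h g : Fin K) :
    sketchMeasure n K σ₁ σ₂ {ω | φ / 4 ≤ |cartEntry n K A h g ω|} ≤
      ENNReal.ofReal (16 * (∑ x, ∑ y, A x y ^ 2) / (K ^ 2 * φ ^ 2)) := by
  have hsigns₁ :=
    isOrthogonalFamily_of_uniform_signs measurable_pi_apply (ae_all_iff.1 hval₁) hpair₁
  have hsigns₂ :=
    isOrthogonalFamily_of_uniform_signs measurable_pi_apply (ae_all_iff.1 hval₂) hpair₂
  exact (cart_sketch_tail_bound_general A (by positivity : 0 < φ / 4)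
    (uniformOn_isEquip_real_eval_eq_le_inv · h) (uniformOn_isEquip_real_eval_eq_le_inv · g)
    hsigns₁ hsigns₂).trans_eq (congrArg _ (by ring))
end

section
/- Let n, Π be positive integers with Π dividing n and n ≥ 2, let v₁, …, v_n ∈ ℝ^p be unit vectors, let P : {1,…,n} → {1,…,Π} be a uniform random equipartition, and let s₁, …, s_n be mutually independent uniform random signs in {−1,+1}, independent of P. Fix h ∈ {1,…,Π} and set X = ‖Σ_{i : P(i) = h} s_i·v_i‖₂². Then E[X] = n/Π and Var[X] ≤ 4·‖G‖_F²/Π², where G is the n×n Gram matrix with entries G_{i,j} = ⟨v_i, v_j⟩. -/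
open MeasureTheory ProbabilityTheory
open scoped RealInnerProductSpace ENNReal

/-!
Write `B` for the bucket and `m = n / K` for its size. Expanding the square, `X` equals `m` plus
the off-diagonal quadratic form `∑ s_i s_j ⟪v_i, v_j⟫` over ordered pairs `i ≠ j` in `B`. Given `P`,
this form has mean zero, and since `E[s_i s_j s_k s_l]` vanishes unless `{i, j} = {k, l}`, its
second moment is twice the sum of the `⟪v_i, v_j⟫²`. Averaging over `P`, each pair `i ≠ j` lies in
`B` with the probability `(m - 1) / (K (n - 1))`, found by double counting from the symmetry of the
uniform equipartition under permutations of indices and buckets. It is at most `1 / K²`, so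
`Var X ≤ 2 ‖G‖_F² / K²`.
-/

open Finset
open scoped BigOperators

section UniformLaws

variable {α β : Type*} [MeasurableSpace α] [MeasurableSingletonClass α]
  [MeasurableSpace β] [MeasurableSingletonClass β]

lemma integral_uniformOn_finset (s : Finset α) (F : α → ℝ) :
    ∫ x, F x ∂uniformOn (s : Set α) = 𝔼 x ∈ s, F x := by
  have hF : IntegrableOn F s Measure.count := by
    rw [← (s : Set α).biUnion_of_singleton]
    simp [integrableOn_finset_iUnion]
  rw [uniformOn, ProbabilityTheory.cond, integral_smul_measure, setIntegral_finset s hF]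
  simp [expect_eq_sum_div_card, div_eq_inv_mul, Measure.real]

lemma integral_uniformOfFintype [Fintype α] [Nonempty α] (F : α → ℝ) :
    ∫ x, F x ∂(PMF.uniformOfFintype α).toMeasure = 𝔼 x, F x := by
  simp [PMF.integral_eq_sum, Fintype.expect_eq_sum_div_card, div_eq_inv_mul, mul_sum]

lemma integral_uniformOn_prod_uniformOfFintype [Finite α] [Fintype β] [Nonempty β] (s : Finset α)
    (F : α × β → ℝ) :
    ∫ ω, F ω ∂(uniformOn (s : Set α)).prod (PMF.uniformOfFintype β).toMeasure =
      𝔼 x ∈ s, 𝔼 y, F (x, y) := by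
  have : IsFiniteMeasure (uniformOn (s : Set α)) := by
    unfold uniformOn
    infer_instance
  rw [integral_prod _ .of_finite]
  simp_rw [integral_uniformOfFintype, integral_uniformOn_finset]

end UniformLaws

section Signs

/-- The random sign encoded by a Boolean: `1` for `true` and `-1` for `false`. -/
def boolSign (b : Bool) : ℝ := if b then 1 else -1

lemma boolSign_not (b : Bool) : boolSign (!b) = -boolSign b := by
  cases b <;> simp [boolSign]

lemma boolSign_mul_self (b : Bool) : boolSign b * boolSign b = 1 := by
  cases b <;> simp [boolSign]

variable {ι : Type*}

/-- The sum over `s` of the vectors `v i` with the random signs encoded by `ε`. -/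
noncomputable def signedSum {E : Type*} [AddCommMonoid E] [Module ℝ E] (s : Finset ι) (v : ι → E)
    (ε : ι → Bool) : E :=
  ∑ i ∈ s, boolSign (ε i) • v i

/-- The Rademacher chaos of order two on `s` with coefficients `a`: the off-diagonal part of a
quadratic form in the signs encoded by `ε`. -/
def signChaos (s : Finset ι) (a : ι × ι → ℝ) (ε : ι → Bool) : ℝ :=
  ∑ x ∈ s.offDiag, a x * (boolSign (ε x.1) * boolSign (ε x.2))

variable {E : Type*} [NormedAddCommGroup E] [InnerProductSpace ℝ E]

lemma norm_signedSum_sq (s : Finset ι) (v : ι → E) (ε : ι → Bool) :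
    ‖signedSum s v ε‖ ^ 2 = ∑ i ∈ s, ‖v i‖ ^ 2 + signChaos s (fun x ↦ ⟪v x.1, v x.2⟫) ε := by
  calc ‖signedSum s v ε‖ ^ 2
    _ = ∑ x ∈ s ×ˢ s, ⟪v x.1, v x.2⟫ * (boolSign (ε x.1) * boolSign (ε x.2)) := by
      rw [← real_inner_self_eq_norm_sq, signedSum, sum_inner, sum_product]
      simp_rw [inner_sum, real_inner_smul_left, real_inner_smul_right]
      exact sum_congr rfl fun i _ ↦ sum_congr rfl fun j _ ↦ by ring
    _ = ∑ i ∈ s, ‖v i‖ ^ 2 + signChaos s (fun x ↦ ⟪v x.1, v x.2⟫) ε := by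
      classical
      rw [← diag_union_offDiag, sum_union (disjoint_diag_offDiag s), sum_diag, signChaos]
      simp [boolSign_mul_self]

variable [Fintype ι] [DecidableEq ι]

lemma expect_eq_zero_of_update_not_eq_neg (i : ι) (F : (ι → Bool) → ℝ)
    (hF : ∀ ε, F (Function.update ε i (!ε i)) = -F ε) : 𝔼 ε, F ε = 0 := by
  have hinv : Function.Involutive fun ε : ι → Bool ↦ Function.update ε i (!ε i) := fun ε ↦ by simp
  have hodd : 𝔼 ε, -F ε = 𝔼 ε, F ε :=
    Fintype.expect_equiv hinv.toPerm _ _ fun ε ↦ (hF ε).symm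
  rw [expect_neg_distrib] at hodd
  linarith

lemma expect_boolSign_mul_boolSign {i j : ι} (hij : i ≠ j) :
    𝔼 ε : ι → Bool, boolSign (ε i) * boolSign (ε j) = 0 :=
  expect_eq_zero_of_update_not_eq_neg i _ fun ε ↦ by
    simp [hij.symm, boolSign_not]

lemma expect_boolSign_pair_mul_pair {x y : ι × ι} (hx : x.1 ≠ x.2) (hy : y.1 ≠ y.2) :
    𝔼 ε : ι → Bool,
        (boolSign (ε x.1) * boolSign (ε x.2)) * (boolSign (ε y.1) * boolSign (ε y.2)) =
      (if y = x then 1 else 0) + (if y = x.swap then 1 else 0) := by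
  have hsq (b c : Bool) : (boolSign b * boolSign c) * (boolSign b * boolSign c) = 1 := by
    rw [mul_mul_mul_comm, boolSign_mul_self, boolSign_mul_self, one_mul]
  have hsq_swap (b c : Bool) : (boolSign b * boolSign c) * (boolSign c * boolSign b) = 1 := by
    rw [mul_comm (boolSign c), hsq]
  by_cases hyx : y = x
  · subst hyx
    have : y ≠ y.swap := by simp [Prod.ext_iff, hx]
    simp [hsq, this]
  by_cases hyx' : y = x.swap
  · subst hyx'
    have : x.swap ≠ x := by simp [Prod.ext_iff, hx]
    simp [hsq_swap, this]
  rw [if_neg hyx, if_neg hyx', add_zero]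
  -- One of `x.1`, `x.2` occurs only once, and flipping its sign negates the product.
  obtain ⟨h₁, h₂⟩ | ⟨h₁, h₂⟩ : (y.1 ≠ x.1 ∧ y.2 ≠ x.1) ∨ (y.1 ≠ x.2 ∧ y.2 ≠ x.2) := by
    grind
  · exact expect_eq_zero_of_update_not_eq_neg x.1 _ fun ε ↦ by
      simp [hx.symm, h₁, h₂, boolSign_not]
  · exact expect_eq_zero_of_update_not_eq_neg x.2 _ fun ε ↦ by
      simp [hx, h₁, h₂, boolSign_not]

lemma expect_signChaos (s : Finset ι) (a : ι × ι → ℝ) : 𝔼 ε, signChaos s a ε = 0 := by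
  simp_rw [signChaos, expect_sum_comm, ← mul_expect]
  refine sum_eq_zero fun x hx ↦ ?_
  rw [expect_boolSign_mul_boolSign (mem_offDiag.1 hx).2.2, mul_zero]

lemma expect_signChaos_sq (s : Finset ι) {a : ι × ι → ℝ} (ha : ∀ x, a x.swap = a x) :
    𝔼 ε, signChaos s a ε ^ 2 = 2 * ∑ x ∈ s.offDiag, a x ^ 2 := by
  calc 𝔼 ε, signChaos s a ε ^ 2
    _ = ∑ x ∈ s.offDiag, ∑ y ∈ s.offDiag, a x * a y * 𝔼 ε : ι → Bool,
          (boolSign (ε x.1) * boolSign (ε x.2)) * (boolSign (ε y.1) * boolSign (ε y.2)) := by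
      simp_rw [signChaos, sq, sum_mul_sum, expect_sum_comm, mul_expect, mul_mul_mul_comm]
    _ = ∑ x ∈ s.offDiag, ∑ y ∈ s.offDiag,
          a x * a y * ((if y = x then 1 else 0) + if y = x.swap then 1 else 0) :=
      sum_congr rfl fun x hx ↦ sum_congr rfl fun y hy ↦ by
        rw [expect_boolSign_pair_mul_pair (mem_offDiag.1 hx).2.2 (mem_offDiag.1 hy).2.2]
    _ = ∑ x ∈ s.offDiag, 2 * a x ^ 2 := by
      refine sum_congr rfl fun x hx ↦ ?_
      have hx' : x.swap ∈ s.offDiag := by simpa [and_left_comm, eq_comm] using hx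
      simp only [mul_add, mul_ite, mul_one, mul_zero, sum_add_distrib, sum_ite_eq', hx, hx',
        if_true, ha]
      ring
    _ = 2 * ∑ x ∈ s.offDiag, a x ^ 2 := (mul_sum ..).symm

lemma expect_norm_signedSum_sq (s : Finset ι) (v : ι → E) :
    𝔼 ε, ‖signedSum s v ε‖ ^ 2 = ∑ i ∈ s, ‖v i‖ ^ 2 := by
  simp_rw [norm_signedSum_sq, expect_add_distrib, expect_signChaos, add_zero, Fintype.expect_const]

lemma expect_norm_signedSum_sq_sub_sq (s : Finset ι) (v : ι → E) :
    𝔼 ε, (‖signedSum s v ε‖ ^ 2 - ∑ i ∈ s, ‖v i‖ ^ 2) ^ 2 =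
      2 * ∑ x ∈ s.offDiag, ⟪v x.1, v x.2⟫ ^ 2 := by
  simp_rw [norm_signedSum_sq, add_sub_cancel_left]
  exact expect_signChaos_sq s fun x ↦ real_inner_comm ..

end Signs

section Equipartitions

variable {ι κ : Type*} [Fintype ι] [DecidableEq ι] [Fintype κ] [DecidableEq κ] {m : ℕ}

variable (ι κ m) in
/-- The equipartitions of `ι` indexed by `κ`, encoded as the functions whose fibers all have `m`
elements; for `m = n / K` these are the functions satisfying `IsEquip n K`. -/
def equipartitions : Finset (ι → κ) := {f | ∀ b, #{i | f i = b} = m}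

lemma mem_equipartitions {f : ι → κ} : f ∈ equipartitions ι κ m ↔ ∀ b, #{i | f i = b} = m := by
  simp [equipartitions]

lemma equipartitions_nonempty (hcard : Fintype.card ι = Fintype.card κ * m) :
    (equipartitions ι κ m).Nonempty := by
  obtain ⟨e⟩ : Nonempty (ι ≃ κ × Fin m) := Fintype.card_eq.1 (by simp [hcard])
  refine ⟨fun i ↦ (e i).1, mem_equipartitions.2 fun b ↦ ?_⟩
  calc #{i | (e i).1 = b}
    _ = #(({b} : Finset κ) ×ˢ (univ : Finset (Fin m))) :=
      card_equiv e fun i ↦ by simp [Prod.ext_iff, eq_comm]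
    _ = m := by simp

lemma expect_equipartitions_comp {M : Type*} [AddCommMonoid M] [Module ℚ≥0 M] (σ : Equiv.Perm ι)
    (τ : Equiv.Perm κ) (F : (ι → κ) → M) :
    𝔼 f ∈ equipartitions ι κ m, F (τ ∘ f ∘ σ) = 𝔼 f ∈ equipartitions ι κ m, F f := by
  refine expect_equiv (σ.symm.arrowCongr τ) (fun f ↦ ?_) fun f _ ↦ rfl
  have hfiber (b : κ) : #{i | τ (f (σ i)) = b} = #{i | f i = τ.symm b} :=
    card_equiv σ fun i ↦ by simp [Equiv.eq_symm_apply]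
  simp only [mem_equipartitions, Equiv.arrowCongr_apply, Equiv.symm_symm, Function.comp_apply,
    hfiber]
  exact τ.symm.surjective.forall

lemma expect_equipartitions_ite_apply_eq (hcard : Fintype.card ι = Fintype.card κ * m) (i : ι)
    (h : κ) :
    𝔼 f ∈ equipartitions ι κ m, (if f i = h then (1 : ℝ) else 0) = 1 / Fintype.card κ := by
  have : Nonempty κ := ⟨h⟩
  have hconst (h' : κ) : 𝔼 f ∈ equipartitions ι κ m, (if f i = h' then (1 : ℝ) else 0) =
      𝔼 f ∈ equipartitions ι κ m, (if f i = h then (1 : ℝ) else 0) := by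
    rw [← expect_equipartitions_comp 1 (Equiv.swap h h')]
    simp [Equiv.swap_apply_eq_iff]
  rw [eq_div_iff (by positivity), mul_comm]
  calc Fintype.card κ * 𝔼 f ∈ equipartitions ι κ m, (if f i = h then (1 : ℝ) else 0)
    _ = ∑ h', 𝔼 f ∈ equipartitions ι κ m, (if f i = h' then (1 : ℝ) else 0) := by
      simp [hconst]
    _ = 1 := by
      simp [← expect_sum_comm, expect_const (equipartitions_nonempty hcard)]

lemma card_sub_one_mul_expect_equipartitions_ite_pair
    (hcard : Fintype.card ι = Fintype.card κ * m) (h : κ) {i j : ι} (hij : i ≠ j) :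
    (Fintype.card ι - 1) *
        𝔼 f ∈ equipartitions ι κ m, (if f i = h ∧ f j = h then (1 : ℝ) else 0) =
      (m - 1) / Fintype.card κ := by
  have hconst : ∀ k ∈ univ.erase i,
      𝔼 f ∈ equipartitions ι κ m, (if f i = h ∧ f k = h then (1 : ℝ) else 0) =
        𝔼 f ∈ equipartitions ι κ m, (if f i = h ∧ f j = h then (1 : ℝ) else 0) := by
    intro k hk
    rw [← expect_equipartitions_comp (Equiv.swap j k) 1]
    simp [Equiv.swap_apply_of_ne_of_ne hij (ne_of_mem_erase hk).symm]
  have hfiber : ∀ f ∈ equipartitions ι κ m,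
      ∑ k ∈ univ.erase i, (if f i = h ∧ f k = h then (1 : ℝ) else 0) =
        (m - 1) * if f i = h then 1 else 0 := by
    intro f hf
    by_cases hi : f i = h
    · simp only [hi, true_and, if_true, mul_one]
      rw [sum_erase_eq_sub (mem_univ i), sum_boole, mem_equipartitions.1 hf h, if_pos hi]
    · simp [hi]
  calc (Fintype.card ι - 1) *
        𝔼 f ∈ equipartitions ι κ m, (if f i = h ∧ f j = h then (1 : ℝ) else 0)
    _ = ∑ k ∈ univ.erase i,
          𝔼 f ∈ equipartitions ι κ m, (if f i = h ∧ f k = h then (1 : ℝ) else 0) := by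
      rw [sum_congr rfl hconst, sum_const, nsmul_eq_mul, cast_card_erase_of_mem (mem_univ i),
        card_univ]
    _ = (m - 1) * 𝔼 f ∈ equipartitions ι κ m, (if f i = h then (1 : ℝ) else 0) := by
      rw [← expect_sum_comm, expect_congr rfl hfiber, mul_expect]
    _ = (m - 1) / Fintype.card κ := by
      rw [expect_equipartitions_ite_apply_eq hcard, mul_one_div]

lemma expect_equipartitions_ite_pair_le (hcard : Fintype.card ι = Fintype.card κ * m) (h : κ)
    {i j : ι} (hij : i ≠ j) :
    𝔼 f ∈ equipartitions ι κ m, (if f i = h ∧ f j = h then (1 : ℝ) else 0) ≤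
      1 / Fintype.card κ ^ 2 := by
  have hι : (0 : ℝ) < Fintype.card ι - 1 := by
    simpa using Fintype.one_lt_card_iff.2 ⟨i, j, hij⟩
  have hκ : (1 : ℝ) ≤ Fintype.card κ := by exact_mod_cast Fintype.card_pos_iff.2 ⟨h⟩
  have hcard' : (Fintype.card ι : ℝ) = Fintype.card κ * m := by exact_mod_cast hcard
  refine le_of_mul_le_mul_left ?_ hι
  rw [card_sub_one_mul_expect_equipartitions_ite_pair hcard h hij, hcard', mul_one_div,
    div_le_div_iff₀ (by positivity) (by positivity)]
  linear_combination le_self_pow₀ hκ two_ne_zero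

lemma expect_sum_offDiag_fiber_le (hcard : Fintype.card ι = Fintype.card κ * m) (h : κ)
    {g : ι × ι → ℝ} (hg : ∀ x, 0 ≤ g x) :
    𝔼 f ∈ equipartitions ι κ m, ∑ x ∈ offDiag {i | f i = h}, g x ≤
      (∑ x ∈ offDiag univ, g x) / Fintype.card κ ^ 2 := by
  have hoffDiag (f : ι → κ) : ∑ x ∈ offDiag {i | f i = h}, g x =
      ∑ x ∈ offDiag univ, (if f x.1 = h ∧ f x.2 = h then 1 else 0) * g x := by
    simp_rw [ite_mul, one_mul, zero_mul, ← sum_filter]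
    congr 1
    ext x
    simp only [mem_offDiag, mem_filter, mem_univ, true_and]
    tauto
  simp_rw [hoffDiag, expect_sum_comm, ← expect_mul, sum_div]
  refine sum_le_sum fun x hx ↦ ?_
  calc (𝔼 f ∈ equipartitions ι κ m, if f x.1 = h ∧ f x.2 = h then (1 : ℝ) else 0) * g x
    _ ≤ 1 / (Fintype.card κ : ℝ) ^ 2 * g x :=
      mul_le_mul_of_nonneg_right (expect_equipartitions_ite_pair_le hcard h (mem_offDiag.1 hx).2.2)
        (hg x)
    _ = g x / Fintype.card κ ^ 2 := one_div_mul_eq_div ..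

end Equipartitions

section Bucket

variable {ι κ E : Type*} [Fintype ι] [DecidableEq ι] [Fintype κ] [DecidableEq κ]
  [MeasurableSpace κ] [MeasurableSingletonClass κ] [NormedAddCommGroup E] [InnerProductSpace ℝ E]
  {m : ℕ}

variable (ι κ m) in
/-- The joint law of a uniform random equipartition with fibers of size `m` and an independent
uniform sign vector. -/
noncomputable def bucketLaw : Measure ((ι → κ) × (ι → Bool)) :=
  (uniformOn (equipartitions ι κ m : Set (ι → κ))).prod (PMF.uniformOfFintype (ι → Bool)).toMeasure

lemma integral_bucketLaw_norm_signedSum_sq (hcard : Fintype.card ι = Fintype.card κ * m)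
    {v : ι → E} (hv : ∀ i, ‖v i‖ = 1) (h : κ) :
    ∫ ω, ‖signedSum {i | ω.1 i = h} v ω.2‖ ^ 2 ∂bucketLaw ι κ m = m := by
  simp_rw [bucketLaw, integral_uniformOn_prod_uniformOfFintype, expect_norm_signedSum_sq, hv]
  rw [← expect_const (equipartitions_nonempty hcard) (m : ℝ)]
  exact expect_congr rfl fun f hf ↦ by simp [mem_equipartitions.1 hf h]

lemma variance_bucketLaw_norm_signedSum_sq_le (hcard : Fintype.card ι = Fintype.card κ * m)
    {v : ι → E} (hv : ∀ i, ‖v i‖ = 1) (h : κ) :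
    Var[fun ω ↦ ‖signedSum {i | ω.1 i = h} v ω.2‖ ^ 2; bucketLaw ι κ m] ≤
      2 * (∑ x ∈ offDiag univ, ⟪v x.1, v x.2⟫ ^ 2) / Fintype.card κ ^ 2 := by
  have hcond : ∀ f ∈ equipartitions ι κ m,
      𝔼 ε, (‖signedSum {i | f i = h} v ε‖ ^ 2 - m) ^ 2 =
        2 * ∑ x ∈ offDiag {i | f i = h}, ⟪v x.1, v x.2⟫ ^ 2 := by
    intro f hf
    rw [← expect_norm_signedSum_sq_sub_sq]
    simp [hv, mem_equipartitions.1 hf h]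
  rw [variance_eq_integral Measurable.of_discrete.aemeasurable,
    integral_bucketLaw_norm_signedSum_sq hcard hv, bucketLaw,
    integral_uniformOn_prod_uniformOfFintype, expect_congr rfl hcond, ← mul_expect, mul_div_assoc]
  gcongr
  exact expect_sum_offDiag_fiber_le hcard h fun x ↦ sq_nonneg _

theorem bucket_signed_sum_sq_norm_mean_variance_general
    (hcard : Fintype.card ι = Fintype.card κ * m) {v : ι → E} (hv : ∀ i, ‖v i‖ = 1) (h : κ) :
    ∫ ω, ‖signedSum {i | ω.1 i = h} v ω.2‖ ^ 2 ∂bucketLaw ι κ m = m ∧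
      Var[fun ω ↦ ‖signedSum {i | ω.1 i = h} v ω.2‖ ^ 2; bucketLaw ι κ m] ≤
        2 * (∑ i, ∑ j, ⟪v i, v j⟫ ^ 2) / Fintype.card κ ^ 2 := by
  refine ⟨integral_bucketLaw_norm_signedSum_sq hcard hv h,
    (variance_bucketLaw_norm_signedSum_sq_le hcard hv h).trans ?_⟩
  rw [← Fintype.sum_prod_type fun x : ι × ι ↦ ⟪v x.1, v x.2⟫ ^ 2]
  gcongr
  exact subset_univ _

end Bucket

/-- Let `v₁, …, v_n ∈ ℝ^p` be unit vectors, `P : [n] → [K]` a uniform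
random equipartition (`K ∣ n`, `n ≥ 2`) and `s₁, …, s_n` mutually independent uniform
random signs, independent of `P` (modeled by the product of the uniform measure on
equipartitions with the uniform measure on `{−1,+1}^n`, encoded via `Fin n → Bool` with
`true ↦ 1`, `false ↦ −1`; this realizes exactly the stated joint law).  Fix `h`.  For
`X = ‖∑_{i : P i = h} s_i • v_i‖²` we have `E[X] = n/K` and `Var[X] ≤ 4‖G‖_F²/K²`,
where `G` is the Gram matrix `G i j = ⟪v i, v j⟫`. -/
theorem bucket_signed_sum_sq_norm_mean_variance (n K p : ℕ) (hn : 2 ≤ n) (hK : 0 < K)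
    (hdvd : K ∣ n) (v : Fin n → EuclideanSpace ℝ (Fin p)) (hv : ∀ i, ‖v i‖ = 1)
    (G : Matrix (Fin n) (Fin n) ℝ) (hG : ∀ i j, G i j = ⟪v i, v j⟫) (h : Fin K)
    (μ : Measure ((Fin n → Fin K) × (Fin n → Bool)))
    (hμ : μ = (uniformOn {f : Fin n → Fin K | IsEquip n K f}).prod
      (PMF.uniformOfFintype (Fin n → Bool)).toMeasure)
    (X : (Fin n → Fin K) × (Fin n → Bool) → ℝ)
    (hX : X = fun ω =>
      ‖∑ i ∈ Finset.univ.filter fun i => ω.1 i = h,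
          (if ω.2 i then (1 : ℝ) else -1) • v i‖ ^ 2) :
    (∫ ω, X ω ∂μ) = (n : ℝ) / K ∧
      variance X μ ≤ 4 * (∑ i, ∑ j, G i j ^ 2) / K ^ 2 := by
  subst hμ hX
  have hcard : Fintype.card (Fin n) = Fintype.card (Fin K) * (n / K) := by
    simp [Nat.mul_div_cancel' hdvd]
  have hlaw : {f : Fin n → Fin K | IsEquip n K f} = equipartitions (Fin n) (Fin K) (n / K) :=
    Set.ext fun f ↦ by simp [IsEquip, mem_equipartitions]
  obtain ⟨hmean, hvar⟩ := bucket_signed_sum_sq_norm_mean_variance_general hcard hv h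
  rw [Fintype.card_fin] at hvar
  simp_rw [hlaw, hG]
  refine ⟨hmean.trans (Nat.cast_div_charZero hdvd), hvar.trans ?_⟩
  gcongr
  norm_num
end
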